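/- There exists an infinitely differentiable, strictly increasing function ρ₀ : ℝ → ℝ such that a < ρ₀(z) < b for all z ∈ ℝ, ρ₀''(z) = f(ρ₀(z)) for all z ∈ ℝ, ρ₀'(z) = (√2/2)(ρ₀(z)² − a²)(b² − ρ₀(z)²) for all z ∈ ℝ, lim_{z→−∞} ρ₀(z) = a, and lim_{z→+∞} ρ₀(z) = b. -/

import Mathlib

open Filter

noncomputable def prof (a b x : ℝ) : ℝ :=
  Real.sqrt 2 / (b ^ 2 - a ^ 2) *
    (1 / (2 * a) * (Real.log (x - a) - Real.log (x + a))
      + 1 / (2 * b) * (Real.log (b + x) - Real.log (b - x)))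

lemma prof_deriv (a b : ℝ) (ha : 0 < a) (hab : a < b) (x : ℝ) (h1 : a < x) (h2 : x < b) :
    HasDerivAt (prof a b)
      (Real.sqrt 2 / 2 * (x ^ 2 - a ^ 2) * (b ^ 2 - x ^ 2))⁻¹ x := by
  have hb : 0 < b := ha.trans hab
  have e1 : x - a ≠ 0 := by linarith
  have e2 : x + a ≠ 0 := by linarith
  have e3 : b + x ≠ 0 := by linarith
  have e4 : b - x ≠ 0 := by linarith
  have e5 : b - a ≠ 0 := by linarith
  have e6 : b + a ≠ 0 := by linarith
  have d1 := ((hasDerivAt_id x).sub_const a).log e1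
  have d2 := ((hasDerivAt_id x).add_const a).log e2
  have d3 := ((hasDerivAt_id x).const_add b).log e3
  have d4 := ((hasDerivAt_id x).const_sub b).log e4
  have d := (((d1.sub d2).const_mul (1 / (2 * a))).add
    ((d3.sub d4).const_mul (1 / (2 * b)))).const_mul (Real.sqrt 2 / (b ^ 2 - a ^ 2))
  refine HasDerivAt.congr_deriv (f := prof a b) d ?_
  have hs : Real.sqrt 2 ≠ 0 := by positivity
  have hs2 : Real.sqrt 2 ^ 2 = 2 := Real.sq_sqrt (by norm_num)
  simp only [id]
  rw [show b ^ 2 - a ^ 2 = (b - a) * (b + a) by ring,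
    show x ^ 2 - a ^ 2 = (x - a) * (x + a) by ring,
    show b ^ 2 - x ^ 2 = (b - x) * (b + x) by ring]
  field_simp
  rw [hs2]
  ring

lemma prof_bot (a b : ℝ) (ha : 0 < a) (hab : a < b) :
    Tendsto (prof a b) (nhdsWithin a (Set.Ioi a)) atBot := by
  have hb : 0 < b := ha.trans hab
  have hp : 0 < b ^ 2 - a ^ 2 := by nlinarith
  unfold prof
  refine Tendsto.const_mul_atBot (by positivity) ?_
  have c2 : ContinuousAt (fun x : ℝ => 1 / (2 * b) * (Real.log (b + x) - Real.log (b - x))) a := by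
    have : b + a ≠ 0 := by linarith
    have : b - a ≠ 0 := by linarith
    fun_prop (disch := assumption)
  have c1 : ContinuousAt (fun x : ℝ => - Real.log (x + a)) a := by
    have : a + a ≠ 0 := by linarith
    fun_prop (disch := assumption)
  refine Tendsto.atBot_add ?_ (c2.tendsto.mono_left nhdsWithin_le_nhds)
  refine Tendsto.const_mul_atBot (by positivity) ?_
  simp only [sub_eq_add_neg (Real.log _)]
  refine Tendsto.atBot_add ?_ (c1.tendsto.mono_left nhdsWithin_le_nhds)
  refine Real.tendsto_log_nhdsGT_zero.comp ?_
  refine tendsto_nhdsWithin_iff.2 ⟨?_, ?_⟩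
  · have : ContinuousAt (fun x : ℝ => x - a) a := by fun_prop
    simpa using this.tendsto.mono_left (nhdsWithin_le_nhds (s := Set.Ioi a))
  · filter_upwards [self_mem_nhdsWithin] with x hx
    simpa using hx

lemma prof_top (a b : ℝ) (ha : 0 < a) (hab : a < b) :
    Tendsto (prof a b) (nhdsWithin b (Set.Iio b)) atTop := by
  have hb : 0 < b := ha.trans hab
  have hp : 0 < b ^ 2 - a ^ 2 := by nlinarith
  unfold prof
  refine Tendsto.const_mul_atTop (by positivity) ?_
  have c2 : ContinuousAt (fun x : ℝ => 1 / (2 * a) * (Real.log (x - a) - Real.log (x + a))) b := by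
    have : b + a ≠ 0 := by linarith
    have : b - a ≠ 0 := by linarith
    fun_prop (disch := assumption)
  have c1 : ContinuousAt (fun x : ℝ => Real.log (b + x)) b := by
    have : b + b ≠ 0 := by linarith
    fun_prop (disch := assumption)
  refine Tendsto.add_atTop (c2.tendsto.mono_left nhdsWithin_le_nhds) ?_
  refine Tendsto.const_mul_atTop (by positivity) ?_
  simp only [sub_eq_add_neg (Real.log _)]
  refine Tendsto.add_atTop (c1.tendsto.mono_left nhdsWithin_le_nhds) ?_
  refine tendsto_neg_atBot_atTop.comp (Real.tendsto_log_nhdsGT_zero.comp ?_)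
  refine tendsto_nhdsWithin_iff.2 ⟨?_, ?_⟩
  · have : ContinuousAt (fun x : ℝ => b - x) b := by fun_prop
    simpa using this.tendsto.mono_left (nhdsWithin_le_nhds (s := Set.Iio b))
  · filter_upwards [self_mem_nhdsWithin] with x hx
    simpa using hx


/-- For `0 < a < b` and
`f(ρ) = (ρ² − a²)(ρ² − b²)(2ρ² − a² − b²)ρ`, there exists a smooth, strictly increasing
heteroclinic profile `ρ₀ : ℝ → ℝ` with `a < ρ₀ < b`, `ρ₀'' = f(ρ₀)`,
`ρ₀' = (√2/2)(ρ₀² − a²)(b² − ρ₀²)`, `ρ₀(−∞) = a` and `ρ₀(+∞) = b`. -/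
theorem statement2 (a b : ℝ) (ha : 0 < a) (hab : a < b) :
    ∃ ρ₀ : ℝ → ℝ, ContDiff ℝ (⊤ : ℕ∞) ρ₀ ∧ StrictMono ρ₀ ∧
      (∀ z, a < ρ₀ z ∧ ρ₀ z < b) ∧
      (∀ z, deriv (deriv ρ₀) z =
        ((ρ₀ z) ^ 2 - a ^ 2) * ((ρ₀ z) ^ 2 - b ^ 2)
          * (2 * (ρ₀ z) ^ 2 - a ^ 2 - b ^ 2) * ρ₀ z) ∧
      (∀ z, deriv ρ₀ z = Real.sqrt 2 / 2 * ((ρ₀ z) ^ 2 - a ^ 2) * (b ^ 2 - (ρ₀ z) ^ 2)) ∧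
      Tendsto ρ₀ atBot (nhds a) ∧ Tendsto ρ₀ atTop (nhds b) := by
  have hb : 0 < b := ha.trans hab
  have hpos : ∀ x, a < x → x < b →
      0 < Real.sqrt 2 / 2 * (x ^ 2 - a ^ 2) * (b ^ 2 - x ^ 2) := by
    intro x h1 h2
    have : 0 < x ^ 2 - a ^ 2 := by nlinarith
    have : 0 < b ^ 2 - x ^ 2 := by nlinarith
    positivity
  have hd := prof_deriv a b ha hab
  have hc : ContinuousOn (prof a b) (Set.Ioo a b) := fun x hx =>
    (hd x hx.1 hx.2).continuousAt.continuousWithinAt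
  have hm : StrictMonoOn (prof a b) (Set.Ioo a b) := by
    refine strictMonoOn_of_deriv_pos (convex_Ioo a b) hc ?_
    intro x hx
    rw [interior_Ioo] at hx
    rw [(hd x hx.1 hx.2).deriv]
    exact inv_pos.2 (hpos x hx.1 hx.2)
  have hsurj : Set.SurjOn (prof a b) (Set.Ioo a b) Set.univ := by
    refine hc.surjOn_of_tendsto (Set.nonempty_Ioo.2 hab) ?_ ?_
    · exact (tendsto_comp_coe_Ioo_atBot hab).2 (prof_bot a b ha hab)
    · exact (tendsto_comp_coe_Ioo_atTop hab).2 (prof_top a b ha hab)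
  have hex : ∀ z, ∃ x, x ∈ Set.Ioo a b ∧ prof a b x = z := fun z => hsurj (Set.mem_univ z)
  choose ρ hρ hF using hex
  have hleft : ∀ x ∈ Set.Ioo a b, ρ (prof a b x) = x := fun x hx =>
    hm.injOn (hρ _) hx (hF _)
  have hmono : StrictMono ρ := by
    intro z w hzw
    refine (hm.lt_iff_lt (hρ z) (hρ w)).1 ?_
    rwa [hF, hF]
  have hrange : Set.range ρ = Set.Ioo a b := by
    ext x
    exact ⟨fun ⟨z, hz⟩ => hz ▸ hρ z, fun hx => ⟨_, hleft x hx⟩⟩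
  have hcont : ∀ z, ContinuousAt ρ z := by
    intro z
    refine continuousAt_of_monotoneOn_of_image_mem_nhds (s := Set.univ)
      (hmono.monotone.monotoneOn _) univ_mem ?_
    rw [Set.image_univ, hrange]
    exact Ioo_mem_nhds (hρ z).1 (hρ z).2
  have hder : ∀ z, HasDerivAt ρ
      (Real.sqrt 2 / 2 * ((ρ z) ^ 2 - a ^ 2) * (b ^ 2 - (ρ z) ^ 2)) z := by
    intro z
    have := HasDerivAt.of_local_left_inverse (hcont z) (hd (ρ z) (hρ z).1 (hρ z).2)
      (inv_ne_zero (hpos (ρ z) (hρ z).1 (hρ z).2).ne') (Eventually.of_forall hF)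
    rwa [inv_inv] at this
  have hderiv : deriv ρ = fun z =>
      Real.sqrt 2 / 2 * ((ρ z) ^ 2 - a ^ 2) * (b ^ 2 - (ρ z) ^ 2) :=
    funext fun z => (hder z).deriv
  refine ⟨ρ, ?_, hmono, hρ, ?_, fun z => (hder z).deriv, ?_, ?_⟩
  · refine contDiff_infty.2 fun n => ?_
    induction n with
    | zero => exact contDiff_zero.2 (continuous_iff_continuousAt.2 hcont)
    | succ n ih =>
      push_cast
      refine contDiff_succ_iff_deriv.2 ⟨fun z => (hder z).differentiableAt, by simp, ?_⟩
      rw [hderiv]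
      fun_prop
  · intro z
    rw [hderiv]
    have h := hder z
    have h2 := (((h.pow 2).sub_const (a ^ 2)).const_mul (Real.sqrt 2 / 2)).mul
      ((h.pow 2).const_sub (b ^ 2))
    refine (HasDerivAt.deriv h2).trans ?_
    have hs2 : Real.sqrt 2 ^ 2 = 2 := Real.sq_sqrt (by norm_num)
    simp only [Pi.pow_apply]
    push_cast
    generalize Real.sqrt 2 = s at *
    generalize ρ z = r at *
    linear_combination (r * (r ^ 2 - a ^ 2) * (b ^ 2 - r ^ 2) * (b ^ 2 + a ^ 2 - 2 * r ^ 2) / 2) * hs2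
  · exact tendsto_atBot_isGLB hmono.monotone (hrange ▸ isGLB_Ioo hab)
  · exact tendsto_atTop_isLUB hmono.monotone (hrange ▸ isLUB_Ioo hab)
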